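/- arXiv:1302.3454 — 2 statements merged into one kernel-verified Lean document; each statement's English description precedes it below -/
import Mathlib

section
/- Let b > 0 be real. For every z ∈ ℂ with |Im z| < (b+b⁻¹)/2 one has the inversion relation e_b(z)·e_b(−z) = e^{πiz²}·e^{πi(b²+b⁻²)/12}. Equivalently, the function w_b(x) := e^{−(πi/12)(1+2c_b²)}·e^{πix²/2}/e_b(x) satisfies w_b(z)·w_b(−z) = 1 for all z in the strip. -/
open MeasureTheory Complex Real Filter Topology

noncomputable section

/-- The special point `c_b = i(b+b⁻¹)/2`. -/
def cb (b : ℝ) : ℂ := Complex.I * ((b : ℂ) + (b : ℂ)⁻¹) / 2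

/-- The integrand in the integral representation of the noncompact quantum dilogarithm. -/
def ebIntegrand (b ε : ℝ) (z : ℂ) (t : ℝ) : ℂ :=
  Complex.exp (-2 * Complex.I * z * ((t : ℂ) + Complex.I * (ε : ℂ))) /
    (((t : ℂ) + Complex.I * (ε : ℂ)) *
      Complex.sinh ((b : ℂ) * ((t : ℂ) + Complex.I * (ε : ℂ))) *
      Complex.sinh ((b : ℂ)⁻¹ * ((t : ℂ) + Complex.I * (ε : ℂ))))

/-- The noncompact quantum dilogarithm defined with contour parameter `ε`. -/
def ebE (b ε : ℝ) (z : ℂ) : ℂ :=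
  Complex.exp ((1 / 4 : ℂ) * ∫ t : ℝ, ebIntegrand b ε z t)

/-- The noncompact quantum dilogarithm `e_b` (canonical choice of contour parameter;
the value is independent of this choice). -/
def eb (b : ℝ) (z : ℂ) : ℂ := ebE b (π * min b b⁻¹ / 2) z

/-- The function `w_b(x) = e^{−(πi/12)(1+2c_b²)}·e^{πix²/2}/e_b(x)`. -/
def wb (b : ℝ) (z : ℂ) : ℂ :=
  Complex.exp (-((π : ℂ) * Complex.I / 12) * (1 + 2 * (cb b) ^ 2)) *
    Complex.exp ((π : ℂ) * Complex.I * z ^ 2 / 2) / eb b z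

/-- The integrand as a function of a complex variable. -/
def qF (b : ℝ) (z w : ℂ) : ℂ :=
  Complex.exp (-2 * Complex.I * z * w) /
    (w * Complex.sinh ((b : ℂ) * w) * Complex.sinh ((b : ℂ)⁻¹ * w))

lemma qF_neg (b : ℝ) (z w : ℂ) : qF b (-z) w = - qF b z (-w) := by
  unfold qF
  rw [mul_neg (b : ℂ) w, mul_neg (b : ℂ)⁻¹ w, Complex.sinh_neg, Complex.sinh_neg]
  rw [show -2 * Complex.I * -z * w = -2 * Complex.I * z * -w by ring]
  rw [show -w * -Complex.sinh ((b : ℂ) * w) * -Complex.sinh ((b : ℂ)⁻¹ * w) =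
    -(w * Complex.sinh ((b : ℂ) * w) * Complex.sinh ((b : ℂ)⁻¹ * w)) by ring, div_neg, neg_neg]

lemma csinh_re (w : ℂ) : (Complex.sinh w).re = Real.sinh w.re * Real.cos w.im := by
  conv_lhs => rw [← Complex.re_add_im w, Complex.sinh_add, Complex.sinh_mul_I, Complex.cosh_mul_I]
  rw [← Complex.ofReal_sinh, ← Complex.ofReal_cosh, ← Complex.ofReal_sin, ← Complex.ofReal_cos]
  simp only [Complex.add_re, Complex.add_im, Complex.mul_re, Complex.mul_im, Complex.ofReal_re,
    Complex.ofReal_im, Complex.I_re, Complex.I_im]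
  ring

lemma csinh_im (w : ℂ) : (Complex.sinh w).im = Real.cosh w.re * Real.sin w.im := by
  conv_lhs => rw [← Complex.re_add_im w, Complex.sinh_add, Complex.sinh_mul_I, Complex.cosh_mul_I]
  rw [← Complex.ofReal_sinh, ← Complex.ofReal_cosh, ← Complex.ofReal_sin, ← Complex.ofReal_cos]
  simp only [Complex.add_re, Complex.add_im, Complex.mul_re, Complex.mul_im, Complex.ofReal_re,
    Complex.ofReal_im, Complex.I_re, Complex.I_im]
  ring

lemma csinh_ne_zero (w : ℂ) (hw : w ≠ 0) (h : |w.im| < π) : Complex.sinh w ≠ 0 := by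
  intro h0
  have h1 := csinh_re w
  have h2 := csinh_im w
  rw [h0] at h1 h2
  simp only [Complex.zero_re, Complex.zero_im] at h1 h2
  have hs : Real.sin w.im = 0 := by
    rcases mul_eq_zero.1 h2.symm with h | h
    · exact absurd h (Real.cosh_pos _).ne'
    · exact h
  rw [abs_lt] at h
  have him : w.im = 0 := (Real.sin_eq_zero_iff_of_lt_of_lt h.1 h.2).1 hs
  rw [him, Real.cos_zero, mul_one] at h1
  exact hw (Complex.ext (Real.sinh_eq_zero.1 h1.symm) him)

lemma csinh_norm_ge (w : ℂ) : Real.sinh |w.re| ≤ ‖Complex.sinh w‖ := by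
  apply Real.le_sqrt_of_sq_le
  rw [Complex.normSq_apply, csinh_re, csinh_im]
  have : Real.sinh |w.re| ^ 2 = Real.sinh w.re ^ 2 := by
    rcases abs_choice w.re with h | h <;> rw [h]
    rw [Real.sinh_neg]; ring
  rw [this]
  nlinarith [Real.cosh_sq w.re, Real.sin_sq_add_cos_sq w.im, sq_nonneg (Real.sin w.im)]

lemma csinh_norm_ge' (a : ℝ) (ha : 0 < a) (w : ℂ) (hw : 1 ≤ |w.re|) :
    (1 - Real.exp (-(2 * a))) / 2 * Real.exp (a * |w.re|) ≤ ‖Complex.sinh ((a : ℂ) * w)‖ := by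
  refine le_trans ?_ (csinh_norm_ge _)
  have : |((a : ℂ) * w).re| = a * |w.re| := by
    simp [abs_mul, abs_of_pos ha]
  rw [this, Real.sinh_eq]
  have h2 : Real.exp (-(a * |w.re|)) ≤ Real.exp (-(2 * a)) * Real.exp (a * |w.re|) := by
    rw [← Real.exp_add]
    apply Real.exp_le_exp.2
    nlinarith
  linarith

lemma qF_bound (b : ℝ) (hb : 0 < b) (z : ℂ) (hz : |z.im| < (b + b⁻¹) / 2) (ε : ℝ) :
    ∃ C : ℝ, 0 ≤ C ∧ ∀ w : ℂ, 1 ≤ |w.re| → |w.im| ≤ ε → ‖qF b z w‖ ≤ C * (1 + w.re ^ 2)⁻¹ := by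
  have hbi : 0 < b⁻¹ := inv_pos.2 hb
  set δ := b + b⁻¹ - 2 * |z.im| with hδ
  have hδ0 : 0 < δ := by rw [hδ]; linarith
  set c1 := (1 - Real.exp (-(2 * b))) / 2 with hc1
  set c2 := (1 - Real.exp (-(2 * b⁻¹))) / 2 with hc2
  have c1p : 0 < c1 := by
    have : Real.exp (-(2 * b)) < 1 := Real.exp_lt_one_iff.2 (by linarith)
    rw [hc1]; linarith
  have c2p : 0 < c2 := by
    have : Real.exp (-(2 * b⁻¹)) < 1 := Real.exp_lt_one_iff.2 (by linarith)
    rw [hc2]; linarith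
  set m := min 1 (δ ^ 2 / 2) with hm
  have mp : 0 < m := by rw [hm]; positivity
  refine ⟨Real.exp (2 * |z.re| * ε) / (c1 * c2 * m), by positivity, fun w hw hi => ?_⟩
  set x := |w.re| with hx
  have hnum : ‖Complex.exp (-2 * Complex.I * z * w)‖ ≤
      Real.exp (2 * |z.re| * ε) * Real.exp (2 * |z.im| * x) := by
    rw [Complex.norm_exp, ← Real.exp_add]
    apply Real.exp_le_exp.2
    have : (-2 * Complex.I * z * w).re = 2 * (z.re * w.im) + 2 * (z.im * w.re) := by
      simp; ring
    rw [this]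
    have h1 : z.re * w.im ≤ |z.re| * ε := by
      refine (le_abs_self _).trans ?_
      rw [abs_mul]; gcongr
    have h2 : z.im * w.re ≤ |z.im| * x := by
      refine (le_abs_self _).trans ?_
      rw [abs_mul]
    linarith
  have h1 := csinh_norm_ge' b hb w hw
  have h2 := csinh_norm_ge' b⁻¹ hbi w hw
  rw [← hc1, ← hx] at h1
  rw [← hc2, ← hx, Complex.ofReal_inv] at h2
  have hw1 : 1 ≤ ‖w‖ := hw.trans (Complex.abs_re_le_norm w)
  have hden : c1 * c2 * (Real.exp (b * x) * Real.exp (b⁻¹ * x)) ≤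
      ‖w * Complex.sinh ((b : ℂ) * w) * Complex.sinh ((b : ℂ)⁻¹ * w)‖ := by
    rw [norm_mul, norm_mul]
    calc _ = 1 * (c1 * Real.exp (b * x)) * (c2 * Real.exp (b⁻¹ * x)) := by ring
      _ ≤ _ := by gcongr
  have hq : m * (1 + w.re ^ 2) ≤ Real.exp (δ * x) := by
    have hx0 : 0 ≤ x := by linarith
    have := Real.quadratic_le_exp_of_nonneg (x := δ * x) (by positivity)
    have e : w.re ^ 2 = x ^ 2 := (sq_abs _).symm
    rw [e]
    have m1 : m ≤ 1 := min_le_left _ _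
    have m2 : m ≤ δ ^ 2 / 2 := min_le_right _ _
    have : 0 ≤ δ * x := by positivity
    nlinarith [sq_nonneg x]
  have key : Real.exp (b * x) * Real.exp (b⁻¹ * x) = Real.exp (2 * |z.im| * x) * Real.exp (δ * x) := by
    rw [← Real.exp_add, ← Real.exp_add, hδ]; ring_nf
  unfold qF
  rw [norm_div]
  calc _ ≤ (Real.exp (2 * |z.re| * ε) * Real.exp (2 * |z.im| * x)) /
        (c1 * c2 * (Real.exp (b * x) * Real.exp (b⁻¹ * x))) := by
        gcongr
    _ = Real.exp (2 * |z.re| * ε) / (c1 * c2) * (Real.exp (δ * x))⁻¹ := by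
        rw [key]; field_simp
    _ ≤ Real.exp (2 * |z.re| * ε) / (c1 * c2) * (m * (1 + w.re ^ 2))⁻¹ := by
        gcongr
    _ = _ := by
        field_simp

lemma qF_diffAt (b : ℝ) (hb : 0 < b) (z w : ℂ) (hw : w ≠ 0) (hi : |w.im| < π * min b b⁻¹) :
    DifferentiableAt ℂ (qF b z) w := by
  have hbi : 0 < b⁻¹ := inv_pos.2 hb
  have hbc : (b : ℂ) ≠ 0 := Complex.ofReal_ne_zero.2 hb.ne'
  have hmin1 : b * min b b⁻¹ ≤ 1 := by
    calc b * min b b⁻¹ ≤ b * b⁻¹ := by gcongr; exact min_le_right _ _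
      _ = 1 := mul_inv_cancel₀ hb.ne'
  have hmin2 : b⁻¹ * min b b⁻¹ ≤ 1 := by
    calc b⁻¹ * min b b⁻¹ ≤ b⁻¹ * b := by gcongr; exact min_le_left _ _
      _ = 1 := inv_mul_cancel₀ hb.ne'
  have h1 : Complex.sinh ((b : ℂ) * w) ≠ 0 := by
    apply csinh_ne_zero _ (mul_ne_zero hbc hw)
    have : ((b : ℂ) * w).im = b * w.im := by simp
    rw [this, abs_mul, abs_of_pos hb]
    nlinarith [Real.pi_pos]
  have h2 : Complex.sinh ((b : ℂ)⁻¹ * w) ≠ 0 := by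
    apply csinh_ne_zero _ (mul_ne_zero (inv_ne_zero hbc) hw)
    have : ((b : ℂ)⁻¹ * w).im = b⁻¹ * w.im := by rw [← Complex.ofReal_inv]; simp
    rw [this, abs_mul, abs_of_pos hbi]
    nlinarith [Real.pi_pos]
  unfold qF
  have := mul_ne_zero (mul_ne_zero hw h1) h2
  fun_prop (disch := assumption)

lemma lineNe (t s : ℝ) (hs : s ≠ 0) : (t : ℂ) + Complex.I * (s : ℂ) ≠ 0 := by
  intro h
  have := congrArg Complex.im h
  simp at this
  exact hs this

lemma qF_cont (b : ℝ) (hb : 0 < b) (z : ℂ) (s : ℝ) (hs : s ≠ 0) (hi : |s| < π * min b b⁻¹) :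
    Continuous (fun t : ℝ => qF b z ((t : ℂ) + Complex.I * (s : ℂ))) := by
  rw [continuous_iff_continuousAt]
  intro t
  have h : ContinuousAt (qF b z) ((t : ℂ) + Complex.I * (s : ℂ)) :=
    (qF_diffAt b hb z _ (lineNe t s hs) (by simpa using hi)).continuousAt
  exact ContinuousAt.comp (f := fun t : ℝ => (t : ℂ) + Complex.I * (s : ℂ)) (g := qF b z) h (by fun_prop)

lemma qF_integrable (b : ℝ) (hb : 0 < b) (z : ℂ) (hz : |z.im| < (b + b⁻¹) / 2) (s : ℝ)
    (hs : s ≠ 0) (hi : |s| < π * min b b⁻¹) :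
    Integrable (fun t : ℝ => qF b z ((t : ℂ) + Complex.I * (s : ℂ))) := by
  obtain ⟨C, hC, h⟩ := qF_bound b hb z hz |s|
  refine (qF_cont b hb z s hs hi).locallyIntegrable.integrable_of_isBigO_cocompact
    (g := fun t : ℝ => (1 + t ^ 2)⁻¹) ?_ (integrable_inv_one_add_sq.integrableAtFilter _)
  apply Asymptotics.IsBigO.of_bound C
  have : ∀ᶠ t : ℝ in cocompact ℝ, 1 ≤ ‖t‖ := tendsto_norm_cocompact_atTop.eventually_ge_atTop 1
  filter_upwards [this] with t ht
  have := h ((t : ℂ) + Complex.I * (s : ℂ)) (by simpa using ht) (by simp)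
  refine this.trans (le_of_eq ?_)
  rw [Real.norm_of_nonneg (by positivity)]
  simp

/-- Principal part. -/
def qP (p q : ℂ) (w : ℂ) : ℂ := (w ^ 3)⁻¹ + p * (w ^ 2)⁻¹ + q * w⁻¹

lemma exp_r (c : ℂ) : Tendsto (fun w : ℂ => (Complex.exp (c * w) - 1 - c * w - (c * w) ^ 2 / 2) / w ^ 2)
    (𝓝[≠] 0) (𝓝 0) := by
  have h := (Complex.exp_sub_sum_range_succ_isLittleO_pow 2).comp_tendsto
    (k := fun w : ℂ => c * w) (l' := 𝓝[≠] 0) (by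
      have : Tendsto (fun w : ℂ => c * w) (𝓝 0) (𝓝 (c * 0)) := tendsto_id.const_mul c
      rw [mul_zero] at this
      exact this.mono_left nhdsWithin_le_nhds)
  have h2 : (fun w : ℂ => (c * w) ^ 2) =O[𝓝[≠] 0] fun w : ℂ => w ^ 2 := by
    simp_rw [mul_pow]
    exact Asymptotics.isBigO_const_mul_self _ _ _
  have h3 := (h.trans_isBigO h2).tendsto_div_nhds_zero
  refine h3.congr fun w => ?_
  simp [Finset.sum_range_succ, Nat.factorial]
  ring

lemma sinh_r (c : ℂ) : Tendsto (fun w : ℂ => (Complex.sinh (c * w) - c * w - (c * w) ^ 3 / 6) / w ^ 3)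
    (𝓝[≠] 0) (𝓝 0) := by
  have key (c : ℂ) : Tendsto (fun w : ℂ => (Complex.exp (c * w) - 1 - c * w - (c * w) ^ 2 / 2 - (c * w) ^ 3 / 6) / w ^ 3)
    (𝓝[≠] 0) (𝓝 0) := by
    have h := (Complex.exp_sub_sum_range_succ_isLittleO_pow 3).comp_tendsto
      (k := fun w : ℂ => c * w) (l' := 𝓝[≠] 0) (by
        have : Tendsto (fun w : ℂ => c * w) (𝓝 0) (𝓝 (c * 0)) := tendsto_id.const_mul c
        rw [mul_zero] at this
        exact this.mono_left nhdsWithin_le_nhds)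
    have h2 : (fun w : ℂ => (c * w) ^ 3) =O[𝓝[≠] 0] fun w : ℂ => w ^ 3 := by
      simp_rw [mul_pow]
      exact Asymptotics.isBigO_const_mul_self _ _ _
    have h3 := (h.trans_isBigO h2).tendsto_div_nhds_zero
    refine h3.congr fun w => ?_
    simp [Finset.sum_range_succ, Nat.factorial]
    ring
  have := ((key c).sub (key (-c))).div_const 2
  simp only [sub_zero, zero_div] at this
  refine this.congr fun w => ?_
  rw [Complex.sinh, neg_mul]
  ring

lemma qF_littleO (b : ℝ) (hb : 0 < b) (z : ℂ) :
    Tendsto (fun w => w * (qF b z w - qP (-2 * Complex.I * z)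
      (-2 * z ^ 2 - ((b : ℂ) ^ 2 + ((b : ℂ)⁻¹) ^ 2) / 6) w)) (𝓝[≠] 0) (𝓝 0) := by
  have hbc : (b : ℂ) ≠ 0 := Complex.ofReal_ne_zero.2 hb.ne'
  have H0 := exp_r (-2 * Complex.I * z)
  have H1 := sinh_r (b : ℂ)
  have H2 := sinh_r ((b : ℂ)⁻¹)
  set r0 : ℂ → ℂ := fun w : ℂ => (Complex.exp (-2 * Complex.I * z * w) - 1 - -2 * Complex.I * z * w - (-2 * Complex.I * z * w) ^ 2 / 2) / w ^ 2 with hr0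
  set r1 : ℂ → ℂ := fun w : ℂ => (Complex.sinh ((b : ℂ) * w) - (b : ℂ) * w - ((b : ℂ) * w) ^ 3 / 6) / w ^ 3 with hr1
  set r2 : ℂ → ℂ := fun w : ℂ => (Complex.sinh ((b : ℂ)⁻¹ * w) - (b : ℂ)⁻¹ * w - ((b : ℂ)⁻¹ * w) ^ 3 / 6) / w ^ 3 with hr2
  have HW : Tendsto (fun w : ℂ => w) (𝓝[≠] 0) (𝓝 0) := tendsto_id.mono_left nhdsWithin_le_nhds
  set B : ℂ := (b : ℂ) with hB
  set D : ℂ := B⁻¹ with hD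
  have hBD : B * D = 1 := mul_inv_cancel₀ hbc
  set p := -2 * Complex.I * z with hp
  set q := -2 * z ^ 2 - (B ^ 2 + D ^ 2) / 6 with hq
  have hpq : p ^ 2 / 2 = -2 * z ^ 2 := by
    rw [hp]; ring_nf; simp
  let s1 : ℂ → ℂ := fun w => B + B ^ 3 * w ^ 2 / 6 + w ^ 2 * r1 w
  let s2 : ℂ → ℂ := fun w => D + D ^ 3 * w ^ 2 / 6 + w ^ 2 * r2 w
  -- product s1 * s2 = 1 + w ^ 2 * T w
  let T : ℂ → ℂ := fun w => (B ^ 2 + D ^ 2) / 6 + B * r2 w + D * r1 w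
    + w ^ 2 * (B ^ 3 / 6 + r1 w) * (D ^ 3 / 6 + r2 w)
  have hS : ∀ w, s1 w * s2 w = 1 + w ^ 2 * T w := by
    intro w
    simp only [s1, s2, T]
    linear_combination (1 + w ^ 2 * (B ^ 2 + D ^ 2) / 6) * hBD
  have hT : Tendsto T (𝓝[≠] 0) (𝓝 ((B ^ 2 + D ^ 2) / 6)) := by
    have : Tendsto T (𝓝[≠] 0) (𝓝 ((B ^ 2 + D ^ 2) / 6 + B * 0 + D * 0 + 0 ^ 2 * (B ^ 3 / 6 + 0) * (D ^ 3 / 6 + 0))) :=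
      ((tendsto_const_nhds.add (H2.const_mul B)).add (H1.const_mul D)).add
        (((HW.pow 2).mul (tendsto_const_nhds.add H1)).mul (tendsto_const_nhds.add H2))
    simpa using this
  have hST : Tendsto (fun w => s1 w * s2 w) (𝓝[≠] 0) (𝓝 1) := by
    simp_rw [hS]
    have := tendsto_const_nhds (x := (1 : ℂ)) |>.add ((HW.pow 2).mul hT)
    simpa using this
  have hN : Tendsto (fun w => (-2 * z ^ 2 - q + r0 w - (1 + p * w + q * w ^ 2) * T w - p * q * 0
      - (p * w * 0)) / (s1 w * s2 w)) (𝓝[≠] 0) (𝓝 0) := by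
    have h1 : Tendsto (fun w => (1 + p * w + q * w ^ 2) * T w) (𝓝[≠] 0) (𝓝 ((1 + p * 0 + q * 0 ^ 2) * ((B ^ 2 + D ^ 2) / 6))) :=
      ((tendsto_const_nhds.add (HW.const_mul p)).add ((HW.pow 2).const_mul q)).mul hT
    have h2 := ((tendsto_const_nhds (x := -2 * z ^ 2 - q)).add H0).sub h1
    have h3 := h2.div hST one_ne_zero
    have e : (-2 * z ^ 2 - q + 0 - (1 + p * 0 + q * 0 ^ 2) * ((B ^ 2 + D ^ 2) / 6)) / 1 = 0 := by
      rw [hq]; ring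
    rw [e] at h3
    refine h3.congr fun w => ?_
    simp
  refine hN.congr' ?_
  have hne : ∀ᶠ w in 𝓝[≠] (0 : ℂ), s1 w * s2 w ≠ 0 := hST.eventually_ne one_ne_zero
  filter_upwards [hne, self_mem_nhdsWithin] with w hw hw0
  have hw0 : w ≠ 0 := hw0
  have e0 : Complex.exp (p * w) = 1 + p * w - 2 * z ^ 2 * w ^ 2 + w ^ 2 * r0 w := by
    have : w ^ 2 * r0 w = Complex.exp (p * w) - 1 - p * w - (p * w) ^ 2 / 2 := by
      simp only [hr0]; field_simp
    rw [this]
    linear_combination w ^ 2 * hpq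
  have e1 : Complex.sinh (B * w) = w * s1 w := by
    have : w ^ 3 * r1 w = Complex.sinh (B * w) - B * w - (B * w) ^ 3 / 6 := by
      simp only [hr1]; field_simp
    simp only [s1]
    linear_combination -this
  have e2 : Complex.sinh (D * w) = w * s2 w := by
    have : w ^ 3 * r2 w = Complex.sinh (D * w) - D * w - (D * w) ^ 3 / 6 := by
      simp only [hr2]; field_simp
    simp only [s2]
    linear_combination -this
  have : qF b z w = (1 + p * w - 2 * z ^ 2 * w ^ 2 + w ^ 2 * r0 w) / (w ^ 3 * (s1 w * s2 w)) := by
    unfold qF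
    rw [← hB, ← hD, ← hp, e0, e1, e2]
    ring_nf
  rw [this]
  unfold qP
  have hx := hS w
  set S := s1 w * s2 w with hSdef
  field_simp
  rw [hx]
  ring

lemma inv_line_tendsto (s : ℝ) :
    Tendsto (fun t : ℝ => ((t : ℂ) + Complex.I * (s : ℂ))⁻¹) (cocompact ℝ) (𝓝 0) := by
  rw [tendsto_zero_iff_norm_tendsto_zero]
  refine squeeze_zero' (g := fun t : ℝ => ‖t‖⁻¹) (Eventually.of_forall fun _ => norm_nonneg _) ?_
    (tendsto_inv_atTop_zero.comp tendsto_norm_cocompact_atTop)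
  have : ∀ᶠ t : ℝ in cocompact ℝ, 1 ≤ ‖t‖ := tendsto_norm_cocompact_atTop.eventually_ge_atTop 1
  filter_upwards [this] with t ht
  rw [norm_inv]
  have h := Complex.abs_re_le_norm ((t : ℂ) + Complex.I * (s : ℂ))
  have h' : ‖t‖ ≤ ‖(t : ℂ) + Complex.I * (s : ℂ)‖ := by simpa using h
  gcongr

lemma qP_diffAt (p q w : ℂ) (hw : w ≠ 0) : DifferentiableAt ℂ (qP p q) w := by
  unfold qP
  have h3 : w ^ 3 ≠ 0 := pow_ne_zero _ hw
  have h2 : w ^ 2 ≠ 0 := pow_ne_zero _ hw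
  fun_prop (disch := assumption)

lemma qP_cont (p q : ℂ) (s : ℝ) (hs : s ≠ 0) :
    Continuous (fun t : ℝ => qP p q ((t : ℂ) + Complex.I * (s : ℂ))) := by
  rw [continuous_iff_continuousAt]
  intro t
  have h : ContinuousAt (qP p q) ((t : ℂ) + Complex.I * (s : ℂ)) :=
    (qP_diffAt p q _ (lineNe t s hs)).continuousAt
  exact ContinuousAt.comp (f := fun t : ℝ => (t : ℂ) + Complex.I * (s : ℂ)) (g := qP p q) h
    (by fun_prop)

/-- Antiderivative of the first two terms of the principal part. -/
def qQ (p : ℂ) (w : ℂ) : ℂ := -(1 / 2) * (w⁻¹) ^ 2 - p * w⁻¹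

lemma qQ_deriv (p : ℂ) (s : ℝ) (hs : s ≠ 0) (t : ℝ) :
    HasDerivAt (fun t : ℝ => qQ p ((t : ℂ) + Complex.I * (s : ℂ)))
      (qP p 0 ((t : ℂ) + Complex.I * (s : ℂ))) t := by
  have hne := lineNe t s hs
  have h1 : HasDerivAt (fun t : ℝ => (t : ℂ) + Complex.I * (s : ℂ)) 1 t :=
    (Complex.ofRealCLM.hasDerivAt (x := t)).add_const _
  have h2 := h1.inv hne
  have h3 := ((h2.pow 2).const_mul (-(1 / 2 : ℂ))).sub (h2.const_mul p)
  refine HasDerivAt.congr_deriv (f := fun t : ℝ => qQ p ((t : ℂ) + Complex.I * (s : ℂ))) h3 ?_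
  unfold qP
  simp
  field_simp
  ring

lemma qP_pair (p q : ℂ) (ε : ℝ) (hε : 0 < ε) :
    Tendsto (fun R : ℝ => (∫ t in (-R)..R, qP p q ((t : ℂ) + Complex.I * (ε : ℂ)))
      - ∫ t in (-R)..R, qP p q ((t : ℂ) + Complex.I * ((-ε : ℝ) : ℂ))) atTop
      (𝓝 (-2 * π * Complex.I * q)) := by
  have hε' : -ε ≠ 0 := by linarith
  let A : ℝ → ℂ := fun t => qQ p ((t : ℂ) + Complex.I * (ε : ℂ)) -
    qQ p ((t : ℂ) + Complex.I * ((-ε : ℝ) : ℂ)) - 2 * Complex.I * q * ((Real.arctan (t / ε) : ℝ) : ℂ)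
  have hA : ∀ t : ℝ, HasDerivAt A (qP p q ((t : ℂ) + Complex.I * (ε : ℂ)) -
      qP p q ((t : ℂ) + Complex.I * ((-ε : ℝ) : ℂ))) t := by
    intro t
    have ha : HasDerivAt (fun t : ℝ => Real.arctan (t / ε)) (1 / (1 + (t / ε) ^ 2) * (1 / ε)) t :=
      ((hasDerivAt_id t).div_const ε).arctan
    have h := ((qQ_deriv p ε hε.ne' t).sub (qQ_deriv p (-ε) hε' t)).sub
      (ha.ofReal_comp.const_mul (2 * Complex.I * q))
    refine HasDerivAt.congr_deriv (f := A) h ?_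
    have n1 := lineNe t ε hε.ne'
    have n2 := lineNe t (-ε) hε'
    unfold qP
    have hεc : (ε : ℂ) ≠ 0 := Complex.ofReal_ne_zero.2 hε.ne'
    have e : ((1 / (1 + (t / ε) ^ 2) * (1 / ε) : ℝ) : ℂ) =
        ε / (((t : ℂ) + Complex.I * (ε : ℂ)) * ((t : ℂ) + Complex.I * ((-ε : ℝ) : ℂ))) := by
      have e1 : ((t : ℂ) + Complex.I * (ε : ℂ)) * ((t : ℂ) + Complex.I * ((-ε : ℝ) : ℂ)) =
          ((t ^ 2 + ε ^ 2 : ℝ) : ℂ) := by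
        push_cast
        linear_combination (-(ε : ℂ) ^ 2) * Complex.I_sq
      rw [e1, ← Complex.ofReal_div]
      congr 1
      have : t ^ 2 + ε ^ 2 ≠ 0 := by positivity
      have : 1 + (t / ε) ^ 2 ≠ 0 := by positivity
      field_simp
      ring
    rw [e]
    have e2 : ((t : ℂ) + Complex.I * (ε : ℂ))⁻¹ - ((t : ℂ) + Complex.I * ((-ε : ℝ) : ℂ))⁻¹ =
        -(2 * Complex.I * (ε / (((t : ℂ) + Complex.I * (ε : ℂ)) * ((t : ℂ) + Complex.I * ((-ε : ℝ) : ℂ))))) := by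
      rw [inv_sub_inv n1 n2, ← mul_div_assoc, ← neg_div]
      congr 1
      push_cast
      ring
    linear_combination -q * e2
  have hint : ∀ R : ℝ, (∫ t in (-R)..R, qP p q ((t : ℂ) + Complex.I * (ε : ℂ)))
      - ∫ t in (-R)..R, qP p q ((t : ℂ) + Complex.I * ((-ε : ℝ) : ℂ)) = A R - A (-R) := by
    intro R
    have c1 := qP_cont p q ε hε.ne'
    have c2 := qP_cont p q (-ε) hε'
    rw [← intervalIntegral.integral_sub (c1.intervalIntegrable _ _) (c2.intervalIntegrable _ _)]
    exact intervalIntegral.integral_eq_sub_of_hasDerivAt (fun x _ => hA x)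
      ((c1.sub c2).intervalIntegrable _ _)
  simp_rw [hint]
  have hQ : ∀ s : ℝ, Tendsto (fun t : ℝ => qQ p ((t : ℂ) + Complex.I * (s : ℂ))) (cocompact ℝ) (𝓝 0) := by
    intro s
    have h := inv_line_tendsto s
    have := ((h.pow 2).const_mul (-(1 / 2 : ℂ))).sub (h.const_mul p)
    simpa [qQ] using this
  have at1 : Tendsto (fun R : ℝ => ((Real.arctan (R / ε) : ℝ) : ℂ)) atTop (𝓝 ((π / 2 : ℝ) : ℂ)) := by
    refine (Complex.continuous_ofReal.tendsto _).comp ?_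
    exact (tendsto_nhds_of_tendsto_nhdsWithin Real.tendsto_arctan_atTop).comp
      (tendsto_id.atTop_div_const hε)
  have hbt : Tendsto (fun R : ℝ => R) atTop (cocompact ℝ) := by
    rw [cocompact_eq_atBot_atTop]; exact tendsto_id.mono_right le_sup_right
  have hbn : Tendsto (fun R : ℝ => -R) atTop (cocompact ℝ) := by
    rw [cocompact_eq_atBot_atTop]; exact tendsto_neg_atTop_atBot.mono_right le_sup_left
  have L1 := (((hQ ε).comp hbt).sub ((hQ (-ε)).comp hbt)).sub (at1.const_mul (2 * Complex.I * q))
  have L2 := (((hQ ε).comp hbn).sub ((hQ (-ε)).comp hbn)).add (at1.const_mul (2 * Complex.I * q))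
  have L := L1.sub L2
  have e : (0 - 0 - 2 * Complex.I * q * ((π / 2 : ℝ) : ℂ)) - (0 - 0 + 2 * Complex.I * q * ((π / 2 : ℝ) : ℂ))
    = -2 * π * Complex.I * q := by push_cast; ring
  rw [e] at L
  refine L.congr fun R => ?_
  simp only [A, Function.comp, neg_div, Real.arctan_neg]
  push_cast
  ring

lemma contour (b : ℝ) (hb : 0 < b) (z : ℂ) (hz : |z.im| < (b + b⁻¹) / 2) (ε : ℝ) (hε : 0 < ε)
    (hi : ε < π * min b b⁻¹) :
    (∫ t : ℝ, qF b z ((t : ℂ) + Complex.I * (ε : ℂ))) -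
      ∫ t : ℝ, qF b z ((t : ℂ) + Complex.I * ((-ε : ℝ) : ℂ)) =
    -2 * π * Complex.I * (-2 * z ^ 2 - ((b : ℂ) ^ 2 + ((b : ℂ)⁻¹) ^ 2) / 6) := by
  set q := (-2 * z ^ 2 - ((b : ℂ) ^ 2 + ((b : ℂ)⁻¹) ^ 2) / 6) with hq
  set p := -2 * Complex.I * z with hp
  have hε' : -ε ≠ 0 := by linarith
  have hi1 : |ε| < π * min b b⁻¹ := by rwa [abs_of_pos hε]
  have hi2 : |-ε| < π * min b b⁻¹ := by rwa [abs_neg]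
  let U : Set ℂ := {w | |w.im| < π * min b b⁻¹}
  have hU : IsOpen U := isOpen_lt (by fun_prop) continuous_const
  have h0U : U ∈ 𝓝 (0 : ℂ) := hU.mem_nhds (by
    simp only [U, Set.mem_ofPred_eq, Complex.zero_im, abs_zero]; linarith)
  let f : ℂ → ℂ := fun w => qF b z w - qP p q w
  let g : ℂ → ℂ := Function.update f 0 (limUnder (𝓝[≠] 0) f)
  have hg : DifferentiableOn ℂ g U := by
    apply Complex.differentiableOn_update_limUnder_of_isLittleO h0U
    · intro w hw
      exact ((qF_diffAt b hb z w hw.2 hw.1).sub (qP_diffAt p q w hw.2)).differentiableWithinAt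
    · have hf0 : f 0 = 0 := by simp [f, qF, qP]
      rw [hf0, Asymptotics.isLittleO_iff_tendsto']
      · refine (qF_littleO b hb z).congr fun w => ?_
        simp [f, p, q, mul_comm]
      · filter_upwards [self_mem_nhdsWithin] with w hw h
        rw [sub_zero, inv_eq_zero] at h
        exact absurd h hw
  have hgf : ∀ w, w ≠ 0 → g w = f w := fun w hw => Function.update_of_ne hw _ _
  -- vertical sides
  obtain ⟨C, hC, hFb⟩ := qF_bound b hb z hz ε
  have hvb : ∀ w : ℂ, 1 ≤ |w.re| → |w.im| ≤ ε → ‖g w‖ ≤ (C + (1 + ‖p‖ + ‖q‖)) * |w.re|⁻¹ := by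
    intro w hw hwi
    have hw0 : w ≠ 0 := by
      rintro rfl; simp at hw; linarith
    rw [hgf w hw0]
    have hwp : 0 < |w.re| := by linarith
    have hn : |w.re| ≤ ‖w‖ := Complex.abs_re_le_norm w
    have hn1 : 1 ≤ ‖w‖ := hw.trans hn
    have i1 : ‖w‖⁻¹ ≤ |w.re|⁻¹ := by gcongr
    have i2 : (‖w‖ ^ 2)⁻¹ ≤ |w.re|⁻¹ := by
      refine le_trans ?_ i1
      apply inv_anti₀ (by linarith); nlinarith
    have i3 : (‖w‖ ^ 3)⁻¹ ≤ |w.re|⁻¹ := by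
      refine le_trans ?_ i1
      apply inv_anti₀ (by linarith); nlinarith [mul_self_nonneg (‖w‖ - 1), sq_nonneg ‖w‖]
    have i4 : (1 + w.re ^ 2)⁻¹ ≤ |w.re|⁻¹ := by
      apply inv_anti₀ hwp
      nlinarith [sq_abs w.re]
    have hP : ‖qP p q w‖ ≤ (1 + ‖p‖ + ‖q‖) * |w.re|⁻¹ := by
      unfold qP
      calc _ ≤ ‖(w ^ 3)⁻¹‖ + ‖p * (w ^ 2)⁻¹‖ + ‖q * w⁻¹‖ := norm_add₃_le
        _ = (‖w‖ ^ 3)⁻¹ + ‖p‖ * (‖w‖ ^ 2)⁻¹ + ‖q‖ * ‖w‖⁻¹ := by simp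
        _ ≤ |w.re|⁻¹ + ‖p‖ * |w.re|⁻¹ + ‖q‖ * |w.re|⁻¹ := by gcongr
        _ = _ := by ring
    calc ‖f w‖ ≤ ‖qF b z w‖ + ‖qP p q w‖ := norm_sub_le _ _
      _ ≤ C * (1 + w.re ^ 2)⁻¹ + (1 + ‖p‖ + ‖q‖) * |w.re|⁻¹ := add_le_add (hFb w hw hwi) hP
      _ ≤ C * |w.re|⁻¹ + (1 + ‖p‖ + ‖q‖) * |w.re|⁻¹ := by gcongr
      _ = _ := by ring
  have hbt : Tendsto (fun R : ℝ => R) atTop (cocompact ℝ) := by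
    rw [cocompact_eq_atBot_atTop]; exact tendsto_id.mono_right le_sup_right
  have hbn : Tendsto (fun R : ℝ => -R) atTop (cocompact ℝ) := by
    rw [cocompact_eq_atBot_atTop]; exact tendsto_neg_atTop_atBot.mono_right le_sup_left
  have hV : Tendsto (fun R : ℝ => ∫ y in (-ε)..ε, g ((R : ℂ) + y * Complex.I)) (cocompact ℝ) (𝓝 0) := by
    rw [tendsto_zero_iff_norm_tendsto_zero]
    refine squeeze_zero' (g := fun R : ℝ => (C + (1 + ‖p‖ + ‖q‖)) * ‖R‖⁻¹ * |ε - -ε|)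
      (Eventually.of_forall fun _ => norm_nonneg _) ?_ ?_
    · have : ∀ᶠ t : ℝ in cocompact ℝ, 1 ≤ ‖t‖ :=
        tendsto_norm_cocompact_atTop.eventually_ge_atTop 1
      filter_upwards [this] with R hR
      apply intervalIntegral.norm_integral_le_of_norm_le_const
      intro y hy
      rw [Set.uIoc_of_le (by linarith)] at hy
      have := hvb ((R : ℂ) + y * Complex.I) (by simpa using hR) (by
        simpa using abs_le.2 ⟨hy.1.le, hy.2⟩)
      simpa using this
    · have : Tendsto (fun R : ℝ => ‖R‖⁻¹) (cocompact ℝ) (𝓝 0) :=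
        tendsto_inv_atTop_zero.comp tendsto_norm_cocompact_atTop
      simpa using (this.const_mul (C + (1 + ‖p‖ + ‖q‖))).mul_const |ε - -ε|
  -- the rectangle
  have hrect : ∀ R : ℝ, (∫ t in (-R)..R, g ((t : ℂ) + Complex.I * (ε : ℂ))) -
      (∫ t in (-R)..R, g ((t : ℂ) + Complex.I * ((-ε : ℝ) : ℂ))) =
      Complex.I * (∫ y in (-ε)..ε, g ((R : ℂ) + y * Complex.I)) -
      Complex.I * (∫ y in (-ε)..ε, g (((-R : ℝ) : ℂ) + y * Complex.I)) := by
    intro R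
    have h := Complex.integral_boundary_rect_eq_zero_of_differentiableOn g ⟨-R, -ε⟩ ⟨R, ε⟩ (by
      refine hg.mono ?_
      intro w hw
      have h2 := hw.2
      simp only [Set.mem_preimage] at h2
      rw [Set.uIcc_of_le (by linarith)] at h2
      exact (abs_le.2 h2).trans_lt hi)
    simp only [smul_eq_mul] at h
    simp only [mul_comm Complex.I ((ε : ℝ) : ℂ), mul_comm Complex.I ((-ε : ℝ) : ℂ)]
    linear_combination -h
  have hlim0 : Tendsto (fun R : ℝ => (∫ t in (-R)..R, g ((t : ℂ) + Complex.I * (ε : ℂ))) -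
      (∫ t in (-R)..R, g ((t : ℂ) + Complex.I * ((-ε : ℝ) : ℂ)))) atTop (𝓝 0) := by
    simp_rw [hrect]
    simpa using ((hV.comp hbt).const_mul Complex.I).sub ((hV.comp hbn).const_mul Complex.I)
  have hsplit : ∀ s : ℝ, s ≠ 0 → |s| < π * min b b⁻¹ → ∀ R : ℝ,
      (∫ t in (-R)..R, g ((t : ℂ) + Complex.I * (s : ℂ))) =
      (∫ t in (-R)..R, qF b z ((t : ℂ) + Complex.I * (s : ℂ))) -
      ∫ t in (-R)..R, qP p q ((t : ℂ) + Complex.I * (s : ℂ)) := by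
    intro s hs hsi R
    rw [← intervalIntegral.integral_sub ((qF_cont b hb z s hs hsi).intervalIntegrable _ _)
      ((qP_cont p q s hs).intervalIntegrable _ _)]
    congr 1
    funext t
    exact hgf _ (lineNe t s hs)
  have hF : ∀ s : ℝ, s ≠ 0 → |s| < π * min b b⁻¹ →
      Tendsto (fun R : ℝ => ∫ t in (-R)..R, qF b z ((t : ℂ) + Complex.I * (s : ℂ))) atTop
      (𝓝 (∫ t : ℝ, qF b z ((t : ℂ) + Complex.I * (s : ℂ)))) := fun s hs hsi =>
    intervalIntegral_tendsto_integral (qF_integrable b hb z hz s hs hsi)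
      tendsto_neg_atTop_atBot tendsto_id
  have L := ((hF ε hε.ne' hi1).sub (hF (-ε) hε' hi2)).sub (qP_pair p q ε hε)
  have L' := L.congr (f₂ := fun R : ℝ => (∫ t in (-R)..R, g ((t : ℂ) + Complex.I * (ε : ℂ))) -
      (∫ t in (-R)..R, g ((t : ℂ) + Complex.I * ((-ε : ℝ) : ℂ)))) (fun R => by
    rw [hsplit ε hε.ne' hi1 R, hsplit (-ε) hε' hi2 R]; ring)
  exact sub_eq_zero.1 (tendsto_nhds_unique L' hlim0)

/-- the inversion relation
`e_b(z)·e_b(−z) = e^{πiz²}·e^{πi(b²+b⁻²)/12}`, equivalently `w_b(z)·w_b(−z) = 1`,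
on the strip `|Im z| < (b+b⁻¹)/2`. -/
theorem statement5 (b : ℝ) (hb : 0 < b) (z : ℂ) (hz : |z.im| < (b + b⁻¹) / 2) :
    eb b z * eb b (-z) =
      Complex.exp ((π : ℂ) * Complex.I * z ^ 2) *
        Complex.exp ((π : ℂ) * Complex.I * ((b : ℂ) ^ 2 + ((b : ℂ)⁻¹) ^ 2) / 12) ∧
    wb b z * wb b (-z) = 1 := by
  have hbi : 0 < b⁻¹ := inv_pos.2 hb
  have main : eb b z * eb b (-z) =
      Complex.exp ((π : ℂ) * Complex.I * z ^ 2) *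
        Complex.exp ((π : ℂ) * Complex.I * ((b : ℂ) ^ 2 + ((b : ℂ)⁻¹) ^ 2) / 12) := by
    have hm : 0 < π * min b b⁻¹ := by
      have := Real.pi_pos
      positivity
    set ε := π * min b b⁻¹ / 2 with hε
    have h := contour b hb z hz ε (by positivity) (by linarith)
    have h2 : (∫ t : ℝ, qF b (-z) ((t : ℂ) + Complex.I * (ε : ℂ))) =
        -∫ t : ℝ, qF b z ((t : ℂ) + Complex.I * ((-ε : ℝ) : ℂ)) := by
      rw [← integral_neg, ← integral_neg_eq_self]
      congr 1
      funext t
      rw [qF_neg]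
      congr 2
      push_cast
      ring
    have e1 : eb b z = Complex.exp ((1 / 4 : ℂ) * ∫ t : ℝ, qF b z ((t : ℂ) + Complex.I * (ε : ℂ))) :=
      rfl
    have e2 : eb b (-z) =
        Complex.exp ((1 / 4 : ℂ) * ∫ t : ℝ, qF b (-z) ((t : ℂ) + Complex.I * (ε : ℂ))) := rfl
    rw [e1, e2, h2, ← Complex.exp_add, ← Complex.exp_add]
    congr 1
    linear_combination (1 / 4 : ℂ) * h
  refine ⟨main, ?_⟩
  unfold wb
  rw [div_mul_div_comm, main, div_eq_one_iff_eq (mul_ne_zero (Complex.exp_ne_zero _) (Complex.exp_ne_zero _))]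
  simp only [← Complex.exp_add]
  congr 1
  have hbc : (b : ℂ) * (b : ℂ)⁻¹ = 1 := mul_inv_cancel₀ (Complex.ofReal_ne_zero.2 hb.ne')
  have hc : cb b ^ 2 = -((b : ℂ) ^ 2 + ((b : ℂ)⁻¹) ^ 2 + 2) / 4 := by
    unfold cb
    linear_combination (((b : ℂ) + (b : ℂ)⁻¹) ^ 2 / 4) * Complex.I_sq - (1 / 2) * hbc
  rw [hc]
  ring

end
end

section
/- Let b > 0 be real. For every η ∈ (0, (b+b⁻¹)/2), one has e_b(z) → 1 as Re z → −∞, uniformly for z in the strip |Im z| ≤ (b+b⁻¹)/2 − η; consequently e_b(z)·e^{−πiz²} → e^{πi(b²+b⁻²)/12} as Re z → +∞, uniformly in the same strip. -/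
open MeasureTheory Complex Real Filter Topology

noncomputable section

/-- The meromorphic integrand. -/
def fF (b : ℝ) (z w : ℂ) : ℂ :=
  Complex.exp (-2 * Complex.I * z * w) /
    (w * Complex.sinh ((b : ℂ) * w) * Complex.sinh ((b : ℂ)⁻¹ * w))

theorem exp_lim : Tendsto (fun w : ℂ => (Complex.exp w - 1 - w) / w ^ 2) (𝓝[≠] 0) (𝓝 (1 / 2)) := by
  have h := (Complex.exp_sub_sum_range_succ_isLittleO_pow 2).tendsto_div_nhds_zero
  have h' := (h.mono_left (nhdsWithin_le_nhds (s := {0}ᶜ))).add_const (1 / 2 : ℂ)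
  rw [zero_add] at h'
  refine h'.congr' ?_
  filter_upwards [self_mem_nhdsWithin] with w hw
  have hw : w ≠ 0 := hw
  simp [Finset.sum_range_succ, Nat.factorial]
  field_simp
  ring

theorem sinh_lim3 : Tendsto (fun w : ℂ => (Complex.sinh w - w) / w ^ 3) (𝓝[≠] 0) (𝓝 (1 / 6)) := by
  have h := (Complex.exp_sub_sum_range_succ_isLittleO_pow 3).tendsto_div_nhds_zero
  have hn : Tendsto (fun w : ℂ => -w) (𝓝 0) (𝓝 0) := by
    simpa using (continuous_neg.tendsto (0 : ℂ))
  have h2 := (((h.add (h.comp hn)).div_const 2).mono_left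
    (nhdsWithin_le_nhds (s := {0}ᶜ))).add_const (1 / 6 : ℂ)
  rw [add_zero, zero_div, zero_add] at h2
  refine h2.congr' ?_
  filter_upwards [self_mem_nhdsWithin] with w hw
  have hw : w ≠ 0 := hw
  simp [Finset.sum_range_succ, Nat.factorial, Complex.sinh]
  field_simp
  ring

theorem sinh_lim1 : Tendsto (fun w : ℂ => Complex.sinh w / w) (𝓝[≠] 0) (𝓝 1) := by
  have h0 : Tendsto (fun w : ℂ => w ^ 2) (𝓝[≠] 0) (𝓝 0) := by
    have : Tendsto (fun w : ℂ => w ^ 2) (𝓝 0) (𝓝 (0 ^ 2)) := (continuous_pow 2).tendsto 0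
    simpa using this.mono_left (nhdsWithin_le_nhds (s := {0}ᶜ))
  have h := (sinh_lim3.mul h0).add_const 1
  rw [mul_zero, zero_add] at h
  refine h.congr' ?_
  filter_upwards [self_mem_nhdsWithin] with w hw
  have hw : w ≠ 0 := hw
  field_simp
  ring

theorem sinh_inv_lim : Tendsto (fun w : ℂ => (w / Complex.sinh w - 1) / w ^ 2) (𝓝[≠] 0)
    (𝓝 (-(1 / 6))) := by
  have h := (sinh_lim3.mul (sinh_lim1.inv₀ one_ne_zero)).neg
  rw [inv_one, mul_one] at h
  refine h.congr' ?_
  filter_upwards [self_mem_nhdsWithin, sinh_lim1.eventually_ne one_ne_zero] with w hw hs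
  have hw : w ≠ 0 := hw
  have hs : Complex.sinh w ≠ 0 := by
    intro h; apply hs; simp [h]
  field_simp
  ring

theorem tendsto_scale (k : ℂ) (hk : k ≠ 0) :
    Tendsto (fun w : ℂ => k * w) (𝓝[≠] 0) (𝓝[≠] 0) := by
  refine tendsto_nhdsWithin_iff.2 ⟨?_, ?_⟩
  · have : Tendsto (fun w : ℂ => k * w) (𝓝 0) (𝓝 (k * 0)) :=
      (continuous_const.mul continuous_id).tendsto 0
    simpa using this.mono_left (nhdsWithin_le_nhds (s := {0}ᶜ))
  · filter_upwards [self_mem_nhdsWithin] with w hw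
    exact mul_ne_zero hk hw

theorem exp_lim_k (k : ℂ) :
    Tendsto (fun w : ℂ => (Complex.exp (k * w) - 1 - k * w) / w ^ 2) (𝓝[≠] 0) (𝓝 (k ^ 2 / 2)) := by
  by_cases hk : k = 0
  · simp [hk]
  have h := (exp_lim.comp (tendsto_scale k hk)).const_mul (k ^ 2)
  rw [mul_one_div] at h
  refine h.congr' ?_
  filter_upwards [self_mem_nhdsWithin] with w hw
  have hw : w ≠ 0 := hw
  simp only [Function.comp]
  field_simp

theorem sinh_lim_k (k : ℂ) (hk : k ≠ 0) :
    Tendsto (fun w : ℂ => (k * w / Complex.sinh (k * w) - 1) / w ^ 2) (𝓝[≠] 0)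
      (𝓝 (-(k ^ 2 / 6))) := by
  have h := (sinh_inv_lim.comp (tendsto_scale k hk)).const_mul (k ^ 2)
  rw [show k ^ 2 * (-(1 / 6)) = -(k ^ 2 / 6) by ring] at h
  refine h.congr' ?_
  filter_upwards [self_mem_nhdsWithin] with w hw
  have hw : w ≠ 0 := hw
  simp only [Function.comp]
  field_simp

theorem id_lim : Tendsto (fun w : ℂ => w) (𝓝[≠] 0) (𝓝 0) :=
  tendsto_id.mono_left (nhdsWithin_le_nhds (s := {0}ᶜ))

/-- The residue. -/
def resA (b : ℝ) (z : ℂ) : ℂ :=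
  (-2 * Complex.I * z) ^ 2 / 2 - (b : ℂ) ^ 2 / 6 - ((b : ℂ)⁻¹) ^ 2 / 6

/-- The polar part. -/
def polar (b : ℝ) (z w : ℂ) : ℂ :=
  1 / w ^ 3 + (-2 * Complex.I * z) / w ^ 2 + resA b z / w

theorem local_lim (b : ℝ) (hb : 0 < b) (z : ℂ) :
    Tendsto (fun w : ℂ => w * (fF b z w - polar b z w)) (𝓝[≠] 0) (𝓝 0) := by
  have hb' : (b : ℂ) ≠ 0 := by exact_mod_cast hb.ne'
  have hA := exp_lim_k (-2 * Complex.I * z)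
  have hB := sinh_lim_k (b : ℂ) hb'
  have hC := sinh_lim_k ((b : ℂ)⁻¹) (inv_ne_zero hb')
  have h1 := ((id_lim.const_mul (-2 * Complex.I * z)).const_add 1).add ((id_lim.pow 2).mul hA)
  have h2 := (hB.add hC).add ((id_lim.pow 2).mul (hB.mul hC))
  have h3 := (hA.add (h1.mul h2)).sub_const (resA b z)
  have e : (-2 * Complex.I * z) ^ 2 / 2 + (1 + -2 * Complex.I * z * 0 +
      0 ^ 2 * ((-2 * Complex.I * z) ^ 2 / 2)) * (-((b : ℂ) ^ 2 / 6) + -((b : ℂ)⁻¹ ^ 2 / 6) +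
      0 ^ 2 * (-((b : ℂ) ^ 2 / 6) * -((b : ℂ)⁻¹ ^ 2 / 6))) - resA b z = 0 := by
    unfold resA; ring
  rw [e] at h3
  refine h3.congr' ?_
  have s1 := (sinh_lim1.comp (tendsto_scale (b : ℂ) hb')).eventually_ne one_ne_zero
  have s2 := (sinh_lim1.comp (tendsto_scale ((b : ℂ)⁻¹) (inv_ne_zero hb'))).eventually_ne one_ne_zero
  filter_upwards [self_mem_nhdsWithin, s1, s2] with w hw s1 s2
  have hw : w ≠ 0 := hw
  have s1 : Complex.sinh ((b : ℂ) * w) ≠ 0 := by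
    intro h; apply s1; simp [h]
  have s2 : Complex.sinh ((b : ℂ)⁻¹ * w) ≠ 0 := by
    intro h; apply s2; simp [h]
  unfold fF polar
  generalize resA b z = a
  generalize Complex.sinh ((b : ℂ) * w) = S1 at *
  generalize Complex.sinh ((b : ℂ)⁻¹ * w) = S2 at *
  generalize Complex.exp (-2 * Complex.I * z * w) = E
  generalize (-2 * Complex.I * z) = c
  field_simp
  ring

theorem norm_sinh_sq (x y : ℝ) :
    ‖Complex.sinh ((x : ℂ) + y * Complex.I)‖ ^ 2 = Real.sinh x ^ 2 + Real.sin y ^ 2 := by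
  rw [Complex.sinh_add, Complex.sinh_mul_I, Complex.cosh_mul_I, ← Complex.normSq_eq_norm_sq,
    Complex.normSq_apply]
  simp only [← Complex.ofReal_sinh, ← Complex.ofReal_cosh, ← Complex.ofReal_sin,
    ← Complex.ofReal_cos]
  simp only [Complex.add_re, Complex.add_im, Complex.mul_re, Complex.mul_im, Complex.ofReal_re,
    Complex.ofReal_im, Complex.I_re, Complex.I_im]
  have h1 := Real.cosh_sq x
  have h2 := Real.sin_sq_add_cos_sq y
  linear_combination (Real.sinh x ^ 2) * h2 + Real.sin y ^ 2 * h1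

theorem norm_sinh_ge_sinh (x y : ℝ) :
    |Real.sinh x| ≤ ‖Complex.sinh ((x : ℂ) + y * Complex.I)‖ := by
  apply abs_le_of_sq_le_sq _ (norm_nonneg _)
  rw [norm_sinh_sq]; nlinarith [sq_nonneg (Real.sin y)]

theorem norm_sinh_ge_sin (x y : ℝ) :
    |Real.sin y| * (Real.exp |x| / 2) ≤ ‖Complex.sinh ((x : ℂ) + y * Complex.I)‖ := by
  have h1 : |Real.sin y| * Real.cosh x ≤ ‖Complex.sinh ((x : ℂ) + y * Complex.I)‖ := by
    apply le_of_sq_le_sq _ (norm_nonneg _)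
    rw [norm_sinh_sq, mul_pow, sq_abs, Real.cosh_sq]
    nlinarith [sq_nonneg (Real.sinh x), Real.sin_sq_le_one y]
  refine le_trans (mul_le_mul_of_nonneg_left ?_ (abs_nonneg _)) h1
  rw [← Real.cosh_abs, Real.cosh_eq]
  have := Real.exp_pos (-|x|)
  linarith

theorem sinh_arg (k : ℝ) (w : ℂ) :
    (k : ℂ) * w = ((k * w.re : ℝ) : ℂ) + ((k * w.im : ℝ) : ℂ) * Complex.I := by
  apply Complex.ext <;> simp

theorem sinh_ne (k : ℝ) (hk : 0 < k) (w : ℂ) (hw : w ≠ 0) (h : k * |w.im| < π) :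
    Complex.sinh ((k : ℂ) * w) ≠ 0 := by
  intro h0
  have h1 := norm_sinh_sq (k * w.re) (k * w.im)
  rw [← sinh_arg, h0, norm_zero] at h1
  have h2 : Real.sinh (k * w.re) = 0 := by
    nlinarith [sq_nonneg (Real.sinh (k * w.re)), sq_nonneg (Real.sin (k * w.im))]
  have h3 : Real.sin (k * w.im) = 0 := by
    nlinarith [sq_nonneg (Real.sinh (k * w.re)), sq_nonneg (Real.sin (k * w.im))]
  rw [Real.sinh_eq_zero] at h2
  have h5 : |k * w.im| < π := by rwa [abs_mul, abs_of_pos hk]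
  rw [abs_lt] at h5
  rw [Real.sin_eq_zero_iff_of_lt_of_lt h5.1 h5.2] at h3
  apply hw
  apply Complex.ext
  · simpa [hk.ne'] using h2
  · simpa [hk.ne'] using h3

theorem norm_numer (z w : ℂ) :
    ‖Complex.exp (-2 * Complex.I * z * w)‖ = Real.exp (2 * (z.re * w.im + z.im * w.re)) := by
  rw [Complex.norm_exp]
  congr 1
  simp
  ring

theorem fF_norm_line (b : ℝ) (hb : 0 < b) (η : ℝ) (z w : ℂ)
    (hz : |z.im| ≤ (b + b⁻¹) / 2 - η) (h0 : w.im ≠ 0)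
    (h1 : Real.sin (b * w.im) ≠ 0) (h2 : Real.sin (b⁻¹ * w.im) ≠ 0) :
    ‖fF b z w‖ ≤ Real.exp (2 * z.re * w.im) *
      (4 / (|w.im| * |Real.sin (b * w.im)| * |Real.sin (b⁻¹ * w.im)|)) *
        Real.exp (-(2 * η) * |w.re|) := by
  have hb' : 0 < b⁻¹ := inv_pos.2 hb
  have a0 : 0 < |w.im| := abs_pos.2 h0
  have a1 : 0 < |Real.sin (b * w.im)| := abs_pos.2 h1
  have a2 : 0 < |Real.sin (b⁻¹ * w.im)| := abs_pos.2 h2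
  have n0 := Complex.abs_im_le_norm w
  have n1 := norm_sinh_ge_sin (b * w.re) (b * w.im)
  have n2 := norm_sinh_ge_sin (b⁻¹ * w.re) (b⁻¹ * w.im)
  rw [← sinh_arg, abs_mul b, abs_of_pos hb] at n1
  rw [← sinh_arg, abs_mul b⁻¹, abs_of_pos hb'] at n2
  unfold fF
  rw [norm_div, norm_numer, norm_mul, norm_mul, ← Complex.ofReal_inv]
  have hd : |w.im| * (|Real.sin (b * w.im)| * (Real.exp (b * |w.re|) / 2)) *
      (|Real.sin (b⁻¹ * w.im)| * (Real.exp (b⁻¹ * |w.re|) / 2)) ≤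
      ‖w‖ * ‖Complex.sinh ((b : ℂ) * w)‖ * ‖Complex.sinh (((b⁻¹ : ℝ) : ℂ) * w)‖ := by
    gcongr
  have hn : Real.exp (2 * (z.re * w.im + z.im * w.re)) ≤ Real.exp (2 * z.re * w.im) *
      (Real.exp (-(2 * η) * |w.re|) * (Real.exp (b * |w.re|) * Real.exp (b⁻¹ * |w.re|))) := by
    rw [← Real.exp_add, ← Real.exp_add, ← Real.exp_add]
    apply Real.exp_le_exp.2
    have : z.im * w.re ≤ ((b + b⁻¹) / 2 - η) * |w.re| := by
      calc z.im * w.re ≤ |z.im * w.re| := le_abs_self _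
        _ = |z.im| * |w.re| := abs_mul _ _
        _ ≤ _ := by gcongr
    linarith
  refine (div_le_div₀ (by positivity) hn (by positivity) hd).trans (le_of_eq ?_)
  have := (Real.exp_pos (b * |w.re|)).ne'
  have := (Real.exp_pos (b⁻¹ * |w.re|)).ne'
  field_simp
  try ring

theorem sinh_ge (u : ℝ) (hu : 1 ≤ u) : Real.exp u / 4 ≤ Real.sinh u := by
  rw [Real.sinh_eq]
  have h1 : u + 1 ≤ Real.exp u := Real.add_one_le_exp u
  have h2 : Real.exp (-u) ≤ 1 := Real.exp_le_one_iff.2 (by linarith)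
  linarith

theorem fF_norm_vert (b : ℝ) (hb : 0 < b) (z w : ℂ) (ε : ℝ)
    (hz : |z.im| ≤ (b + b⁻¹) / 2) (hT : 0 < |w.re|) (h1 : 1 ≤ b * |w.re|) (h2 : 1 ≤ b⁻¹ * |w.re|)
    (hw : |w.im| ≤ ε) :
    ‖fF b z w‖ ≤ 16 * Real.exp (2 * |z.re| * ε) / |w.re| := by
  have hb' : 0 < b⁻¹ := inv_pos.2 hb
  have n0 := Complex.abs_re_le_norm w
  have n1 := norm_sinh_ge_sinh (b * w.re) (b * w.im)
  have n2 := norm_sinh_ge_sinh (b⁻¹ * w.re) (b⁻¹ * w.im)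
  rw [← sinh_arg, Real.abs_sinh, abs_mul b, abs_of_pos hb] at n1
  rw [← sinh_arg, Real.abs_sinh, abs_mul b⁻¹, abs_of_pos hb'] at n2
  have n1 := (sinh_ge _ h1).trans n1
  have n2 := (sinh_ge _ h2).trans n2
  unfold fF
  rw [norm_div, norm_numer, norm_mul, norm_mul, ← Complex.ofReal_inv]
  have hd : |w.re| * (Real.exp (b * |w.re|) / 4) * (Real.exp (b⁻¹ * |w.re|) / 4) ≤
      ‖w‖ * ‖Complex.sinh ((b : ℂ) * w)‖ * ‖Complex.sinh (((b⁻¹ : ℝ) : ℂ) * w)‖ := by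
    gcongr
  have hn : Real.exp (2 * (z.re * w.im + z.im * w.re)) ≤ Real.exp (2 * |z.re| * ε) *
      (Real.exp (b * |w.re|) * Real.exp (b⁻¹ * |w.re|)) := by
    rw [← Real.exp_add, ← Real.exp_add]
    apply Real.exp_le_exp.2
    have q1 : z.im * w.re ≤ ((b + b⁻¹) / 2) * |w.re| := by
      calc z.im * w.re ≤ |z.im * w.re| := le_abs_self _
        _ = |z.im| * |w.re| := abs_mul _ _
        _ ≤ _ := by gcongr
    have q2 : z.re * w.im ≤ |z.re| * ε := by
      calc z.re * w.im ≤ |z.re * w.im| := le_abs_self _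
        _ = |z.re| * |w.im| := abs_mul _ _
        _ ≤ _ := by gcongr
    linarith
  refine (div_le_div₀ (by positivity) hn (by positivity) hd).trans (le_of_eq ?_)
  have := (Real.exp_pos (b * |w.re|)).ne'
  have := (Real.exp_pos (b⁻¹ * |w.re|)).ne'
  field_simp
  try ring

theorem polar_norm (b : ℝ) (z w : ℂ) (h1 : 1 ≤ |w.re|) :
    ‖polar b z w‖ ≤ (1 + ‖-2 * Complex.I * z‖ + ‖resA b z‖) / |w.re| := by
  have n0 := Complex.abs_re_le_norm w
  have n1 : 1 ≤ ‖w‖ := h1.trans n0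
  have n2 : ‖w‖ ≤ ‖w‖ ^ 2 := by nlinarith
  have n3 : ‖w‖ ≤ ‖w‖ ^ 3 := by nlinarith
  have p : 0 < |w.re| := by linarith
  unfold polar
  refine (norm_add₃_le).trans ?_
  rw [norm_div, norm_div, norm_div, norm_pow, norm_pow, norm_one, add_div, add_div]
  gcongr
  · exact n0.trans n3
  · exact n0.trans n2

theorem small_exp (K ε δ : ℝ) (hε : 0 < ε) (hδ : 0 < δ) :
    ∃ R : ℝ, ∀ x : ℝ, R ≤ x → K * Real.exp (-(2 * x * ε)) < δ := by
  have h : Tendsto (fun x : ℝ => K * Real.exp (-(2 * x * ε))) atTop (𝓝 (K * 0)) := by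
    apply Tendsto.const_mul
    apply Real.tendsto_exp_neg_atTop_nhds_zero.comp
    apply Tendsto.atTop_mul_const hε
    exact Tendsto.const_mul_atTop (by norm_num) tendsto_id
  rw [mul_zero] at h
  exact eventually_atTop.1 (h.eventually_lt_const hδ)

theorem integrable_exp_abs (η : ℝ) (hη : 0 < η) :
    Integrable (fun t : ℝ => Real.exp (-(2 * η) * |t|)) := by
  rw [← integrableOn_univ, ← Set.Iic_union_Ioi (a := (0 : ℝ)), integrableOn_union]
  constructor
  · refine (integrableOn_exp_mul_Iic (a := 2 * η) (by linarith) 0).congr_fun ?_ measurableSet_Iic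
    intro t ht
    simp only [abs_of_nonpos (Set.mem_Iic.1 ht)]
    congr 1; ring
  · refine (integrableOn_exp_mul_Ioi (a := -(2 * η)) (by linarith) 0).congr_fun ?_ measurableSet_Ioi
    intro t ht
    simp only [abs_of_pos (Set.mem_Ioi.1 ht)]

theorem fF_diff (b : ℝ) (hb : 0 < b) (z w : ℂ) (hw : w ≠ 0) (h1 : b * |w.im| < π)
    (h2 : b⁻¹ * |w.im| < π) : DifferentiableAt ℂ (fF b z) w := by
  have s1 := sinh_ne b hb w hw h1
  have s2 := sinh_ne b⁻¹ (inv_pos.2 hb) w hw h2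
  rw [Complex.ofReal_inv] at s2
  unfold fF
  refine DifferentiableAt.div (by fun_prop) ?_ (mul_ne_zero (mul_ne_zero hw s1) s2)
  have d1 : DifferentiableAt ℂ (fun w : ℂ => Complex.sinh ((b : ℂ) * w)) w :=
    (differentiableAt_id.const_mul _).csinh
  have d2 : DifferentiableAt ℂ (fun w : ℂ => Complex.sinh ((b : ℂ)⁻¹ * w)) w :=
    (differentiableAt_id.const_mul _).csinh
  exact (differentiableAt_id.mul d1).mul d2

theorem polar_diff (b : ℝ) (z w : ℂ) (hw : w ≠ 0) : DifferentiableAt ℂ (polar b z) w := by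
  unfold polar
  have h2 : w ^ 2 ≠ 0 := pow_ne_zero _ hw
  have h3 : w ^ 3 ≠ 0 := pow_ne_zero _ hw
  refine DifferentiableAt.add (DifferentiableAt.add ?_ ?_) ?_
  · exact DifferentiableAt.div (by fun_prop) (by fun_prop) h3
  · exact DifferentiableAt.div (by fun_prop) (by fun_prop) h2
  · exact DifferentiableAt.div (by fun_prop) (by fun_prop) hw

theorem lineC (σ : ℝ) : Continuous (fun t : ℝ => (t : ℂ) + σ * Complex.I) := by fun_prop

theorem line_ne (σ : ℝ) (hσ : σ ≠ 0) (t : ℝ) : (t : ℂ) + σ * Complex.I ≠ 0 := by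
  intro h
  have := congrArg Complex.im h
  simp at this
  exact hσ this

theorem fF_line_cont (b : ℝ) (hb : 0 < b) (z : ℂ) (σ : ℝ) (hσ : σ ≠ 0) (h1 : b * |σ| < π)
    (h2 : b⁻¹ * |σ| < π) : Continuous (fun t : ℝ => fF b z (t + σ * Complex.I)) := by
  rw [continuous_iff_continuousAt]
  intro t
  refine ContinuousAt.comp (f := fun t : ℝ => (t : ℂ) + σ * Complex.I) (g := fF b z) ?_
    (lineC σ).continuousAt
  exact (fF_diff b hb z _ (line_ne σ hσ t) (by simpa using h1) (by simpa using h2)).continuousAt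

theorem polar_line_cont (b : ℝ) (z : ℂ) (σ : ℝ) (hσ : σ ≠ 0) :
    Continuous (fun t : ℝ => polar b z (t + σ * Complex.I)) := by
  rw [continuous_iff_continuousAt]
  intro t
  refine ContinuousAt.comp (f := fun t : ℝ => (t : ℂ) + σ * Complex.I) (g := polar b z) ?_
    (lineC σ).continuousAt
  exact (polar_diff b z _ (line_ne σ hσ t)).continuousAt

theorem sin_ne (k σ : ℝ) (hk : 0 < k) (hσ : σ ≠ 0) (h : k * |σ| < π) : Real.sin (k * σ) ≠ 0 := by
  intro h3
  have h5 : |k * σ| < π := by rwa [abs_mul, abs_of_pos hk]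
  rw [abs_lt] at h5
  rw [Real.sin_eq_zero_iff_of_lt_of_lt h5.1 h5.2] at h3
  simp [hk.ne', hσ] at h3

/-- The constant in the bound on a horizontal line. -/
def lineK (b σ : ℝ) : ℝ := 4 / (|σ| * |Real.sin (b * σ)| * |Real.sin (b⁻¹ * σ)|)

theorem line_bound (b : ℝ) (hb : 0 < b) (η : ℝ) (z : ℂ)
    (hz : |z.im| ≤ (b + b⁻¹) / 2 - η) (σ : ℝ) (hσ : σ ≠ 0) (h1 : b * |σ| < π)
    (h2 : b⁻¹ * |σ| < π) (t : ℝ) :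
    ‖fF b z (t + σ * Complex.I)‖ ≤
      Real.exp (2 * z.re * σ) * lineK b σ * Real.exp (-(2 * η) * |t|) := by
  have := fF_norm_line b hb η z (t + σ * Complex.I) hz (by simpa using hσ)
    (by simpa using sin_ne b σ hb hσ h1) (by simpa using sin_ne b⁻¹ σ (inv_pos.2 hb) hσ h2)
  simpa [lineK] using this

theorem line_integrable (b : ℝ) (hb : 0 < b) (η : ℝ) (hη : 0 < η) (z : ℂ)
    (hz : |z.im| ≤ (b + b⁻¹) / 2 - η) (σ : ℝ) (hσ : σ ≠ 0) (h1 : b * |σ| < π)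
    (h2 : b⁻¹ * |σ| < π) : Integrable (fun t : ℝ => fF b z (t + σ * Complex.I)) :=
  ((integrable_exp_abs η hη).const_mul _).mono' (fF_line_cont b hb z σ hσ h1 h2).aestronglyMeasurable
    (Eventually.of_forall (line_bound b hb η z hz σ hσ h1 h2))

theorem line_integral_bound (b : ℝ) (hb : 0 < b) (η : ℝ) (hη : 0 < η) (z : ℂ)
    (hz : |z.im| ≤ (b + b⁻¹) / 2 - η) (σ : ℝ) (hσ : σ ≠ 0) (h1 : b * |σ| < π)
    (h2 : b⁻¹ * |σ| < π) : ‖∫ t : ℝ, fF b z (t + σ * Complex.I)‖ ≤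
      (lineK b σ * ∫ t : ℝ, Real.exp (-(2 * η) * |t|)) * Real.exp (2 * z.re * σ) := by
  refine (norm_integral_le_of_norm_le ((integrable_exp_abs η hη).const_mul _)
    (Eventually.of_forall (line_bound b hb η z hz σ hσ h1 h2))).trans (le_of_eq ?_)
  rw [integral_const_mul]
  ring

theorem Q_ext (b : ℝ) (hb : 0 < b) (z : ℂ) (ε : ℝ) (hε : 0 < ε) (h1 : b * ε < π)
    (h2 : b⁻¹ * ε < π) :
    ∃ q : ℂ → ℂ, (∀ w, w ≠ 0 → q w = fF b z w - polar b z w) ∧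
      ∀ w : ℂ, |w.im| ≤ ε → DifferentiableAt ℂ q w := by
  classical
  have hb' := inv_pos.2 hb
  let s : Set ℂ := {w | b * |w.im| < π ∧ b⁻¹ * |w.im| < π}
  have hs : IsOpen s := by
    have q1 : IsOpen {w : ℂ | b * |w.im| < π} :=
      isOpen_lt (continuous_const.mul Complex.continuous_im.abs) continuous_const
    have q2 : IsOpen {w : ℂ | b⁻¹ * |w.im| < π} :=
      isOpen_lt (continuous_const.mul Complex.continuous_im.abs) continuous_const
    exact q1.inter q2
  have h0 : (0 : ℂ) ∈ s := by simp [s, Real.pi_pos]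
  let Q : ℂ → ℂ := fun w => fF b z w - polar b z w
  have hd : DifferentiableOn ℂ Q (s \ {0}) := by
    intro w hw
    exact ((fF_diff b hb z w hw.2 hw.1.1 hw.1.2).sub
      (polar_diff b z w hw.2)).differentiableWithinAt
  have ho : (fun w => Q w - Q 0) =o[𝓝[≠] 0] fun w : ℂ => (w - 0)⁻¹ := by
    rw [Asymptotics.isLittleO_iff_tendsto']
    · have hQ : Q 0 = 0 := by simp [Q, fF, polar]
      refine (local_lim b hb z).congr' ?_
      filter_upwards with w
      rw [hQ, sub_zero, sub_zero, div_inv_eq_mul, mul_comm]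
    · filter_upwards [self_mem_nhdsWithin] with w hw h
      have hw : w ≠ 0 := hw
      simp at h
      exact absurd h hw
  refine ⟨Function.update Q 0 (limUnder (𝓝[≠] 0) Q), ?_, ?_⟩
  rotate_left
  · intro w hw
    exact (Complex.differentiableOn_update_limUnder_of_isLittleO (hs.mem_nhds h0) hd
      ho).differentiableAt (hs.mem_nhds
      ⟨(mul_le_mul_of_nonneg_left hw hb.le).trans_lt h1,
        (mul_le_mul_of_nonneg_left hw hb'.le).trans_lt h2⟩)
  · intro w hw
    rw [Function.update_of_ne hw]

theorem rect_lim (b : ℝ) (hb : 0 < b) (z : ℂ) (hz : |z.im| ≤ (b + b⁻¹) / 2)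
    (ε : ℝ) (hε : 0 < ε) (h1 : b * ε < π) (h2 : b⁻¹ * ε < π) :
    Tendsto (fun T : ℝ => (∫ t in (-T)..T, (fF b z (t + ε * Complex.I) - polar b z (t + ε * Complex.I)))
      - ∫ t in (-T)..T, (fF b z (t + (-ε : ℝ) * Complex.I) - polar b z (t + (-ε : ℝ) * Complex.I)))
      atTop (𝓝 0) := by
  obtain ⟨q, hq, hqd⟩ := Q_ext b hb z ε hε h1 h2
  have hb' := inv_pos.2 hb
  set C : ℝ := 16 * Real.exp (2 * |z.re| * ε) + (1 + ‖-2 * Complex.I * z‖ + ‖resA b z‖) with hC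
  have hlim : Tendsto (fun T : ℝ => 2 * (C * |ε - (-ε)|) / T) atTop (𝓝 0) :=
    tendsto_const_nhds.div_atTop tendsto_id
  refine squeeze_zero_norm' ?_ hlim
  filter_upwards [eventually_ge_atTop 1, eventually_ge_atTop b, eventually_ge_atTop b⁻¹] with T t1 t2 t3
  have hT : 0 < T := by linarith
  have R := Complex.integral_boundary_rect_eq_zero_of_differentiableOn q
    (((-T : ℝ) : ℂ) + ((-ε : ℝ) : ℂ) * Complex.I) ((T : ℂ) + (ε : ℂ) * Complex.I) (by
      intro w hw
      refine (hqd w ?_).differentiableWithinAt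
      have := hw.2
      simp [Set.uIcc_of_le (show -ε ≤ ε by linarith)] at this
      exact abs_le.2 this)
  have r1 : (((-T : ℝ) : ℂ) + ((-ε : ℝ) : ℂ) * Complex.I).re = -T := by simp
  have r2 : (((-T : ℝ) : ℂ) + ((-ε : ℝ) : ℂ) * Complex.I).im = -ε := by simp
  have r3 : ((T : ℂ) + (ε : ℂ) * Complex.I).re = T := by simp
  have r4 : ((T : ℂ) + (ε : ℂ) * Complex.I).im = ε := by simp
  rw [r1, r2, r3, r4] at R
  have e1 : ∀ σ : ℝ, σ ≠ 0 → (∫ t in (-T)..T, q (t + σ * Complex.I)) =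
      ∫ t in (-T)..T, (fF b z (t + σ * Complex.I) - polar b z (t + σ * Complex.I)) := by
    intro σ hσ
    congr 1
    funext t
    exact hq _ (line_ne σ hσ t)
  rw [e1 ε hε.ne', e1 (-ε) (neg_ne_zero.2 hε.ne')] at R
  have v : ∀ S : ℝ, |S| = T → ‖∫ y in (-ε)..ε, q (S + y * Complex.I)‖ ≤ C / T * |ε - (-ε)| := by
    intro S hS
    apply intervalIntegral.norm_integral_le_of_norm_le_const
    intro y hy
    rw [Set.uIoc_of_le (by linarith)] at hy
    have hre : ((S : ℂ) + y * Complex.I).re = S := by simp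
    have him : ((S : ℂ) + y * Complex.I).im = y := by simp
    have hne : (S : ℂ) + y * Complex.I ≠ 0 := by
      intro h
      rw [h] at hre
      rw [← hre] at hS
      simp at hS
      linarith
    rw [hq _ hne]
    refine (norm_sub_le _ _).trans ?_
    rw [hC, add_div]
    have b1 : 1 ≤ b * T := by
      calc 1 = b * b⁻¹ := (mul_inv_cancel₀ hb.ne').symm
        _ ≤ _ := by gcongr
    have b2 : 1 ≤ b⁻¹ * T := by
      calc 1 = b⁻¹ * b := (inv_mul_cancel₀ hb.ne').symm
        _ ≤ _ := by gcongr
    have u1 := fF_norm_vert b hb z (S + y * Complex.I) ε hz (by rw [hre, hS]; exact hT)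
      (by rw [hre, hS]; exact b1) (by rw [hre, hS]; exact b2)
      (by rw [him]; exact abs_le.2 ⟨hy.1.le, hy.2⟩)
    have u2 := polar_norm b z (S + y * Complex.I) (by rw [hre, hS]; exact t1)
    rw [hre, hS] at u1 u2
    exact add_le_add u1 u2
  have v1 := v T (abs_of_pos hT)
  have v2 := v (-T) (by rw [abs_neg, abs_of_pos hT])
  set X := ∫ t in (-T)..T, (fF b z (t + ε * Complex.I) - polar b z (t + ε * Complex.I))
  set Y := ∫ t in (-T)..T, (fF b z (t + (-ε : ℝ) * Complex.I) - polar b z (t + (-ε : ℝ) * Complex.I))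
  have : X - Y = Complex.I • (∫ y in (-ε)..ε, q (T + y * Complex.I)) -
      Complex.I • (∫ y in (-ε)..ε, q ((-T : ℝ) + y * Complex.I)) := by
    linear_combination -R
  rw [this]
  refine (norm_sub_le _ _).trans ?_
  rw [norm_smul, norm_smul, Complex.norm_I, one_mul, one_mul]
  refine (add_le_add v1 v2).trans (le_of_eq ?_)
  ring

theorem polar_lim (b : ℝ) (z : ℂ) (ε : ℝ) (hε : 0 < ε) :
    Tendsto (fun T : ℝ => (∫ t in (-T)..T, (polar b z (t + ε * Complex.I)))
      - ∫ t in (-T)..T, (polar b z (t + (-ε : ℝ) * Complex.I)))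
      atTop (𝓝 (-(2 * π * Complex.I) * resA b z)) := by
  have hεn : -ε ≠ 0 := neg_ne_zero.2 hε.ne'
  have hεc : (ε : ℂ) ≠ 0 := by exact_mod_cast hε.ne'
  let c : ℂ := -2 * Complex.I * z
  let G : ℝ → ℝ → ℂ := fun σ t => -(1 / 2) * (1 / ((t : ℂ) + σ * Complex.I) ^ 2)
    - c * (1 / ((t : ℂ) + σ * Complex.I))
  let P : ℝ → ℂ := fun t => G ε t - G (-ε) t - 2 * Complex.I * resA b z * (Real.arctan (t / ε) : ℝ)
  have hG : ∀ σ : ℝ, σ ≠ 0 → ∀ t : ℝ, HasDerivAt (G σ)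
      (1 / ((t : ℂ) + σ * Complex.I) ^ 3 + c / ((t : ℂ) + σ * Complex.I) ^ 2) t := by
    intro σ hσ t
    have hne := line_ne σ hσ t
    have hl : HasDerivAt (fun t : ℝ => (t : ℂ) + σ * Complex.I) 1 t :=
      (Complex.ofRealCLM.hasDerivAt (x := t)).add_const _
    have i1 := hl.fun_inv hne
    have i2 := (hl.fun_pow 2).fun_inv (pow_ne_zero 2 hne)
    have := (i2.const_mul (-(1 / 2) : ℂ)).sub (i1.const_mul c)
    refine (this.congr_deriv ?_).congr_of_eventuallyEq ?_
    · push_cast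
      field_simp
      ring
    · filter_upwards with s
      simp [G]
  have hP : ∀ t : ℝ, HasDerivAt P
      (polar b z (t + ε * Complex.I) - polar b z (t + (-ε : ℝ) * Complex.I)) t := by
    intro t
    have a1 : HasDerivAt (fun t : ℝ => Real.arctan (t / ε)) (1 / (1 + (t / ε) ^ 2) * (1 / ε)) t :=
      ((hasDerivAt_id t).div_const ε).arctan
    have a2 := a1.ofReal_comp.const_mul (2 * Complex.I * resA b z)
    have := ((hG ε hε.ne' t).sub (hG (-ε) hεn t)).sub a2
    refine this.congr_deriv ?_
    have n1 := line_ne ε hε.ne' t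
    have n2 := line_ne (-ε) hεn t
    have key : (2 * Complex.I) * ((1 / (1 + (t / ε) ^ 2) * (1 / ε) : ℝ) : ℂ) =
        1 / ((t : ℂ) + (-ε : ℝ) * Complex.I) - 1 / ((t : ℂ) + ε * Complex.I) := by
      have n3 : (ε : ℂ) ^ 2 + t ^ 2 ≠ 0 := by
        have : ε ^ 2 + t ^ 2 ≠ 0 := by positivity
        exact_mod_cast this
      have n4 : (1 : ℂ) + (t / ε) ^ 2 ≠ 0 := by
        have : 1 + (t / ε) ^ 2 ≠ 0 := by positivity
        exact_mod_cast this
      push_cast at n2 ⊢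
      have e1 : (1 : ℂ) / (1 + (t / ε) ^ 2) * (1 / ε) = ε / (ε ^ 2 + t ^ 2) := by
        field_simp
      rw [e1, div_sub_div _ _ n2 n1, mul_div_assoc', div_eq_div_iff n3 (mul_ne_zero n2 n1)]
      linear_combination (2 * Complex.I * ε * -ε ^ 2) * Complex.I_sq
    unfold polar
    rw [show 2 * Complex.I * resA b z * ((1 / (1 + (t / ε) ^ 2) * (1 / ε) : ℝ) : ℂ) =
      resA b z * (2 * Complex.I * ((1 / (1 + (t / ε) ^ 2) * (1 / ε) : ℝ) : ℂ)) by ring, key]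
    simp only [c]
    ring
  have hI : ∀ T : ℝ, P T - P (-T) = (∫ t in (-T)..T, (polar b z (t + ε * Complex.I)))
      - ∫ t in (-T)..T, (polar b z (t + (-ε : ℝ) * Complex.I)) := by
    intro T
    rw [← intervalIntegral.integral_sub
      ((polar_line_cont b z ε hε.ne').intervalIntegrable _ _)
      ((polar_line_cont b z (-ε) hεn).intervalIntegrable _ _)]
    symm
    apply intervalIntegral.integral_eq_sub_of_hasDerivAt (fun t _ => hP t)
    exact ((polar_line_cont b z ε hε.ne').sub (polar_line_cont b z (-ε) hεn)).intervalIntegrable _ _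
  simp_rw [← hI]
  have inv_lim : ∀ (l : Filter ℝ), Tendsto (fun t : ℝ => |t|) l atTop → ∀ σ : ℝ,
      Tendsto (fun t : ℝ => 1 / ((t : ℂ) + σ * Complex.I)) l (𝓝 0) := by
    intro l hl σ
    rw [tendsto_zero_iff_norm_tendsto_zero]
    simp_rw [norm_div, norm_one]
    apply Tendsto.div_atTop tendsto_const_nhds
    refine tendsto_atTop_mono (fun t => ?_) hl
    simpa using Complex.abs_re_le_norm ((t : ℂ) + σ * Complex.I)
  have G_lim : ∀ (l : Filter ℝ), Tendsto (fun t : ℝ => |t|) l atTop → ∀ σ : ℝ,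
      Tendsto (G σ) l (𝓝 0) := by
    intro l hl σ
    have h := inv_lim l hl σ
    have := (((h.pow 2).const_mul (-(1 / 2) : ℂ))).sub (h.const_mul c)
    simp only [ne_eq, OfNat.ofNat_ne_zero, not_false_eq_true, zero_pow, mul_zero, sub_zero] at this
    refine this.congr ?_
    intro t
    simp [G]
  have P_top : Tendsto P atTop (𝓝 (0 - 0 - 2 * Complex.I * resA b z * ((π / 2 : ℝ) : ℂ))) := by
    refine ((G_lim _ tendsto_abs_atTop_atTop ε).sub (G_lim _ tendsto_abs_atTop_atTop (-ε))).sub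
      (Tendsto.const_mul _ ?_)
    refine (Complex.continuous_ofReal.tendsto _).comp ?_
    exact (tendsto_nhds_of_tendsto_nhdsWithin Real.tendsto_arctan_atTop).comp
      (tendsto_id.atTop_div_const hε)
  have P_bot : Tendsto P atBot (𝓝 (0 - 0 - 2 * Complex.I * resA b z * ((-(π / 2) : ℝ) : ℂ))) := by
    refine ((G_lim _ tendsto_abs_atBot_atTop ε).sub (G_lim _ tendsto_abs_atBot_atTop (-ε))).sub
      (Tendsto.const_mul _ ?_)
    refine (Complex.continuous_ofReal.tendsto _).comp ?_
    exact (tendsto_nhds_of_tendsto_nhdsWithin Real.tendsto_arctan_atBot).comp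
      (tendsto_id.atBot_div_const hε)
  have := P_top.sub (P_bot.comp tendsto_neg_atTop_atBot)
  have e : -(2 * (π : ℂ) * Complex.I) * resA b z = 0 - 0 - 2 * Complex.I * resA b z * ((π / 2 : ℝ) : ℂ) -
      (0 - 0 - 2 * Complex.I * resA b z * ((-(π / 2) : ℝ) : ℂ)) := by
    push_cast
    ring
  rw [e]
  exact this

theorem shift (b : ℝ) (hb : 0 < b) (η : ℝ) (hη : 0 < η) (z : ℂ)
    (hz : |z.im| ≤ (b + b⁻¹) / 2 - η) (ε : ℝ) (hε : 0 < ε) (h1 : b * ε < π) (h2 : b⁻¹ * ε < π) :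
    (∫ t : ℝ, fF b z (t + ε * Complex.I)) =
      (∫ t : ℝ, fF b z (t + (-ε : ℝ) * Complex.I)) - 2 * π * Complex.I * resA b z := by
  have hεn : -ε ≠ 0 := neg_ne_zero.2 hε.ne'
  have a1 : b * |ε| < π := by rwa [abs_of_pos hε]
  have a2 : b⁻¹ * |ε| < π := by rwa [abs_of_pos hε]
  have a3 : b * |-ε| < π := by rwa [abs_neg]
  have a4 : b⁻¹ * |-ε| < π := by rwa [abs_neg]
  have l1 := rect_lim b hb z (by linarith) ε hε h1 h2
  have l2 := polar_lim b z ε hε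
  have i1 := intervalIntegral_tendsto_integral (line_integrable b hb η hη z hz ε hε.ne' a1 a2)
    tendsto_neg_atTop_atBot tendsto_id
  have i2 := intervalIntegral_tendsto_integral (line_integrable b hb η hη z hz (-ε) hεn a3 a4)
    tendsto_neg_atTop_atBot tendsto_id
  have l3 := l1.add l2
  have i3 := i1.sub i2
  have e := tendsto_nhds_unique (l3.congr ?_) i3
  · linear_combination -e
  · intro T
    rw [intervalIntegral.integral_sub, intervalIntegral.integral_sub]
    · simp only [id]
      ring
    · exact (fF_line_cont b hb z (-ε) hεn a3 a4).intervalIntegrable _ _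
    · exact (polar_line_cont b z (-ε) hεn).intervalIntegrable _ _
    · exact (fF_line_cont b hb z ε hε.ne' a1 a2).intervalIntegrable _ _
    · exact (polar_line_cont b z ε hε.ne').intervalIntegrable _ _

theorem eb_eq (b : ℝ) (z : ℂ) : eb b z = Complex.exp ((1 / 4 : ℂ) *
    ∫ t : ℝ, fF b z (t + (π * min b b⁻¹ / 2 : ℝ) * Complex.I)) := by
  unfold eb ebE
  congr 2
  apply integral_congr_ae
  filter_upwards with t
  unfold ebIntegrand fF
  rw [mul_comm Complex.I ((π * min b b⁻¹ / 2 : ℝ) : ℂ)]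

theorem exp_small (d : ℝ) (hd : 0 < d) :
    ∃ δ : ℝ, 0 < δ ∧ ∀ u : ℂ, ‖u‖ < δ → ‖Complex.exp ((1 / 4 : ℂ) * u) - 1‖ < d := by
  have hc : Continuous (fun u : ℂ => Complex.exp ((1 / 4 : ℂ) * u)) := by fun_prop
  obtain ⟨δ, h0, h⟩ := Metric.continuous_iff.1 hc 0 d hd
  refine ⟨δ, h0, fun u hu => ?_⟩
  have := h u (by simpa using hu)
  simpa [dist_eq_norm] using this

theorem eps_facts (b : ℝ) (hb : 0 < b) : 0 < π * min b b⁻¹ / 2 ∧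
    b * (π * min b b⁻¹ / 2) < π ∧ b⁻¹ * (π * min b b⁻¹ / 2) < π := by
  have hb' := inv_pos.2 hb
  have hm : 0 < min b b⁻¹ := lt_min hb hb'
  have hp := Real.pi_pos
  have m1 : b * min b b⁻¹ ≤ 1 := by
    calc b * min b b⁻¹ ≤ b * b⁻¹ := by gcongr; exact min_le_right _ _
      _ = 1 := mul_inv_cancel₀ hb.ne'
  have m2 : b⁻¹ * min b b⁻¹ ≤ 1 := by
    calc b⁻¹ * min b b⁻¹ ≤ b⁻¹ * b := by gcongr; exact min_le_left _ _
      _ = 1 := inv_mul_cancel₀ hb.ne'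
  refine ⟨by positivity, ?_, ?_⟩ <;> nlinarith

/-- asymptotics of `e_b`: `e_b(z) → 1` as `Re z → −∞` and
`e_b(z)·e^{−πiz²} → e^{πi(b²+b⁻²)/12}` as `Re z → +∞`, both uniformly on the strip
`|Im z| ≤ (b+b⁻¹)/2 − η`. -/
theorem statement6 (b : ℝ) (hb : 0 < b) (η : ℝ) (hη₁ : 0 < η) (hη₂ : η < (b + b⁻¹) / 2) :
    (∀ d : ℝ, 0 < d → ∃ R : ℝ, ∀ z : ℂ, |z.im| ≤ (b + b⁻¹) / 2 - η → z.re ≤ -R →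
      ‖eb b z - 1‖ < d) ∧
    (∀ d : ℝ, 0 < d → ∃ R : ℝ, ∀ z : ℂ, |z.im| ≤ (b + b⁻¹) / 2 - η → R ≤ z.re →
      ‖eb b z * Complex.exp (-((π : ℂ) * Complex.I) * z ^ 2) -
          Complex.exp ((π : ℂ) * Complex.I * ((b : ℂ) ^ 2 + ((b : ℂ)⁻¹) ^ 2) / 12)‖ < d) := by
  obtain ⟨hε, h1, h2⟩ := eps_facts b hb
  simp only [eb_eq]
  set ε : ℝ := π * min b b⁻¹ / 2 with hεd
  have hεn : -ε ≠ 0 := neg_ne_zero.2 hε.ne'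
  have a1 : b * |ε| < π := by rwa [abs_of_pos hε]
  have a2 : b⁻¹ * |ε| < π := by rwa [abs_of_pos hε]
  have a3 : b * |-ε| < π := by rwa [abs_neg]
  have a4 : b⁻¹ * |-ε| < π := by rwa [abs_neg]
  constructor
  · intro d hd
    obtain ⟨δ, hδ, hexp⟩ := exp_small d hd
    obtain ⟨R, hR⟩ := small_exp (lineK b ε * ∫ t : ℝ, Real.exp (-(2 * η) * |t|)) ε δ hε hδ
    refine ⟨R, fun z hz hzR => hexp _ ?_⟩
    refine (line_integral_bound b hb η hη₁ z hz ε hε.ne' a1 a2).trans_lt ?_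
    have := hR (-z.re) (by linarith)
    rwa [show -(2 * -z.re * ε) = 2 * z.re * ε by ring] at this
  · intro d hd
    set E := Complex.exp ((π : ℂ) * Complex.I * ((b : ℂ) ^ 2 + ((b : ℂ)⁻¹) ^ 2) / 12) with hE
    have hE0 : 0 < ‖E‖ := norm_pos_iff.2 (Complex.exp_ne_zero _)
    obtain ⟨δ, hδ, hexp⟩ := exp_small (d / ‖E‖) (by positivity)
    obtain ⟨R, hR⟩ := small_exp (lineK b (-ε) * ∫ t : ℝ, Real.exp (-(2 * η) * |t|)) ε δ hε hδ
    refine ⟨R, fun z hz hzR => ?_⟩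
    have hI : ‖∫ t : ℝ, fF b z (t + (-ε : ℝ) * Complex.I)‖ < δ := by
      refine (line_integral_bound b hb η hη₁ z hz (-ε) hεn a3 a4).trans_lt ?_
      have := hR z.re hzR
      rwa [show -(2 * z.re * ε) = 2 * z.re * -ε by ring] at this
    have hs := hexp _ hI
    rw [shift b hb η hη₁ z hz ε hε h1 h2]
    set J := ∫ t : ℝ, fF b z (t + (-ε : ℝ) * Complex.I)
    have key : Complex.exp ((1 / 4 : ℂ) * (J - 2 * π * Complex.I * resA b z)) *
        Complex.exp (-((π : ℂ) * Complex.I) * z ^ 2) = Complex.exp ((1 / 4 : ℂ) * J) * E := by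
      rw [hE, ← Complex.exp_add, ← Complex.exp_add]
      congr 1
      unfold resA
      linear_combination (-(π : ℂ) * Complex.I * z ^ 2) * Complex.I_sq
    rw [key, show Complex.exp ((1 / 4 : ℂ) * J) * E - E = (Complex.exp ((1 / 4 : ℂ) * J) - 1) * E
      by ring, norm_mul]
    exact (lt_div_iff₀ hE0).1 hs

end
end
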